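/- arXiv:1106.1615 — 3 statements merged into one kernel-verified Lean document; each statement's English description precedes it below -/
import Mathlib

section
/- Let Σ be a complete simplicial rational fan in ℝⁿ (n ≥ 1) and let ρ = (ρ_δ)_{δ∈Σ¹} be nonnegative integers, not all zero. If ρ is strictly convex, then the epigraph C_ρ equals the convex cone generated by the vectors (δ, ρ_δ), δ ∈ Σ¹, and this generating set is irredundant: for every δ₀ ∈ Σ¹, the vector (δ₀, ρ_{δ₀}) does not belong to the convex cone generated by {(δ, ρ_δ) : δ ∈ Σ¹, δ ≠ δ₀}. -/
/-- A vector in `ℝⁿ` is integral if all its coordinates are integers. -/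
def IsIntegralVec {n : ℕ} (v : Fin n → ℝ) : Prop := ∀ i, ∃ m : ℤ, v i = (m : ℝ)

/-- The convex cone of all nonnegative linear combinations of a finite set of vectors. -/
def coneHullOf {n : ℕ} (s : Finset (Fin n → ℝ)) : Set (Fin n → ℝ) :=
  { x | ∃ c : (Fin n → ℝ) → ℝ, (∀ v, 0 ≤ c v) ∧ x = ∑ v ∈ s, c v • v }

/-- `F` is a face of the convex cone `σ`: it is cut out of `σ` by a linear functional
that is nonnegative on `σ`. -/
def IsFaceOf {n : ℕ} (F σ : Set (Fin n → ℝ)) : Prop :=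
  ∃ u : (Fin n → ℝ) →ₗ[ℝ] ℝ, (∀ x ∈ σ, 0 ≤ u x) ∧ F = {x ∈ σ | u x = 0}

/-- A complete simplicial rational fan in `ℝⁿ`: a finite nonempty collection of
simplicial rational cones, closed under taking faces, such that the intersection of any
two members is a face of each, and whose union is all of `ℝⁿ`. -/
structure IsCompleteFan {n : ℕ} (S : Set (Set (Fin n → ℝ))) : Prop where
  finite : S.Finite
  nonempty : S.Nonempty
  simplicial : ∀ σ ∈ S, ∃ s : Finset (Fin n → ℝ),
    (∀ v ∈ s, IsIntegralVec v) ∧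
    (LinearIndependent ℝ (fun v : s => (v : Fin n → ℝ))) ∧
    σ = coneHullOf s
  face_mem : ∀ σ ∈ S, ∀ F : Set (Fin n → ℝ), IsFaceOf F σ → F ∈ S
  inter_face : ∀ σ ∈ S, ∀ τ ∈ S, IsFaceOf (σ ∩ τ) σ ∧ IsFaceOf (σ ∩ τ) τ
  complete : ⋃₀ S = Set.univ

/-- A primitive integral vector: an integral vector that is not a positive integer
multiple (with factor ≠ 1) of another integral vector. -/
def IsPrimitiveVec {n : ℕ} (v : Fin n → ℝ) : Prop :=
  IsIntegralVec v ∧ ∀ (m : ℕ) (w : Fin n → ℝ), IsIntegralVec w → v = (m : ℝ) • w → m = 1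

/-- `Σ¹` : the set of primitive integral vectors spanning the one-dimensional members
of the fan `S`. -/
def fanRays {n : ℕ} (S : Set (Set (Fin n → ℝ))) : Set (Fin n → ℝ) :=
  { v | IsPrimitiveVec v ∧ {x | ∃ t : ℝ, 0 ≤ t ∧ x = t • v} ∈ S }

/-- The convex cone generated by a set `A` : all finite nonnegative linear combinations
of elements of `A`. -/
def coneGenBy {E : Type*} [AddCommMonoid E] [Module ℝ E] (A : Set E) : Set E :=
  { x | ∃ (t : Finset E) (c : E → ℝ), ↑t ⊆ A ∧ (∀ v, 0 ≤ c v) ∧ x = ∑ v ∈ t, c v • v }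

/-- The epigraph `C_ρ = {(x, α) : α ≥ f(x)}` of a function `f : ℝⁿ → ℝ`. -/
def epigraphOf {n : ℕ} (f : (Fin n → ℝ) → ℝ) : Set ((Fin n → ℝ) × ℝ) :=
  { p | f p.1 ≤ p.2 }

/-- `ρ` is convex: for every `n`-dimensional cone `σ` of the fan `S` (i.e. `σ` spans `ℝⁿ`),
the linear functional `l_σ` agreeing with `ρ` on the rays of `S` lying in `σ`
satisfies `l_σ ≤ f_ρ` everywhere. -/
def RhoIsConvex {n : ℕ} (S : Set (Set (Fin n → ℝ))) (ρ : (Fin n → ℝ) → ℕ)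
    (f : (Fin n → ℝ) → ℝ) : Prop :=
  ∀ σ ∈ S, Submodule.span ℝ σ = ⊤ →
    ∀ l : (Fin n → ℝ) →ₗ[ℝ] ℝ, (∀ δ ∈ fanRays S, δ ∈ σ → l δ = (ρ δ : ℝ)) →
      ∀ x, l x ≤ f x

/-- `ρ` is strictly convex: for every `n`-dimensional cone `σ` of the fan `S`,
`l_σ ≤ f_ρ` everywhere, with equality exactly on `σ`. -/
def RhoIsStrictlyConvex {n : ℕ} (S : Set (Set (Fin n → ℝ))) (ρ : (Fin n → ℝ) → ℕ)
    (f : (Fin n → ℝ) → ℝ) : Prop :=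
  ∀ σ ∈ S, Submodule.span ℝ σ = ⊤ →
    ∀ l : (Fin n → ℝ) →ₗ[ℝ] ℝ, (∀ δ ∈ fanRays S, δ ∈ σ → l δ = (ρ δ : ℝ)) →
      ∀ x, l x ≤ f x ∧ (l x = f x ↔ x ∈ σ)

/-!
Over each point `x` choose a full-dimensional cone `σ ∋ x`; these exist because, by Baire, the cones
with empty interior can be discarded from the finite closed cover. The functional `l` that agrees
with `f` on `σ` lies below `f`. As `σ` is generated by its rays, applying `x ↦ (x, l x)` puts the
graph point `(x, f x)` in the cone over the rays, and `l ≤ f` on the rays gives the reverse bound.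
The vertical direction is `(x, f x) + (-x, f (-x))` for any `x ≠ 0`: strict convexity and the
salience of `σ` make its height `f x + f (-x)` positive.

For irredundancy, a nonnegative functional vanishing at a point of a cone vanishes on every
generator occurring in it. Applied to `(x, α) ↦ α - l x` this leaves only the rays in `σ`, and
applied to the functional cutting the ray of `δ₀` out of `σ` it leaves none.
-/

section Hull

variable {R E : Type*} [Ring R] [LinearOrder R] [IsStrictOrderedRing R] [AddCommGroup E]
  [Module R E] {A : Set E} {x : E}

lemma mem_hull_singleton {v : E} : x ∈ PointedCone.hull R {v} ↔ ∃ t : R, 0 ≤ t ∧ x = t • v := by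
  rw [Submodule.mem_span_singleton]
  exact ⟨fun ⟨t, ht⟩ => ⟨t, t.2, ht.symm⟩, fun ⟨t, ht, hx⟩ => ⟨⟨t, ht⟩, hx.symm⟩⟩

lemma apply_nonneg_of_mem_hull {u : E →ₗ[R] R} (hu : ∀ a ∈ A, 0 ≤ u a)
    (hx : x ∈ PointedCone.hull R A) : 0 ≤ u x :=
  (Submodule.span_le (p := (PointedCone.positive R R).comap u)).2 hu hx

lemma mem_hull_sep_of_apply_eq_zero {u : E →ₗ[R] R} (hu : ∀ a ∈ A, 0 ≤ u a)
    (hx : x ∈ PointedCone.hull R A) (hux : u x = 0) :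
    x ∈ PointedCone.hull R {a ∈ A | u a = 0} := by
  obtain ⟨c, hcA, hc, rfl⟩ := PointedCone.mem_hull_set.1 hx
  simp only [Finsupp.sum, map_sum, map_smul, smul_eq_mul] at hux
  have hterm : ∀ a ∈ c.support, c a * u a = 0 :=
    (Finset.sum_eq_zero_iff_of_nonneg fun a ha => mul_nonneg (hc a) (hu a (hcA ha))).1 hux
  refine sum_mem fun a ha => PointedCone.smul_mem _ (hc a) (PointedCone.subset_hull ⟨hcA ha, ?_⟩)
  exact (mul_eq_zero.1 (hterm a ha)).resolve_left (Finsupp.mem_support_iff.1 ha)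

variable {f : E → R} {l : E →ₗ[R] R}

lemma prodMk_apply_mem_hull_graph (hl : Set.EqOn l f A) (hx : x ∈ PointedCone.hull R A) :
    (x, l x) ∈ PointedCone.hull R ((fun a => (a, f a)) '' A) := by
  refine (Submodule.span_le (p := (PointedCone.hull R ((fun a => (a, f a)) '' A)).comap
    (LinearMap.id.prod l))).2 (fun a ha => ?_) hx
  simpa [hl ha] using PointedCone.subset_hull (R := R) (Set.mem_image_of_mem (fun a => (a, f a)) ha)

lemma apply_fst_le_snd_of_mem_hull_graph (hl : ∀ a ∈ A, l a ≤ f a) {p : E × R}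
    (hp : p ∈ PointedCone.hull R ((fun a => (a, f a)) '' A)) : l p.1 ≤ p.2 := by
  refine sub_nonneg.1 (apply_nonneg_of_mem_hull
    (u := LinearMap.snd R E R - l ∘ₗ LinearMap.fst R E R) ?_ hp)
  rintro _ ⟨a, ha, rfl⟩
  exact sub_nonneg.2 (hl a ha)

lemma fst_mem_hull_of_mem_hull_graph (hl : ∀ a ∈ A, l a ≤ f a) {p : E × R}
    (hp : p ∈ PointedCone.hull R ((fun a => (a, f a)) '' A)) (hlp : l p.1 = p.2) :
    p.1 ∈ PointedCone.hull R {a ∈ A | l a = f a} := by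
  have hcontact := mem_hull_sep_of_apply_eq_zero
    (u := LinearMap.snd R E R - l ∘ₗ LinearMap.fst R E R)
    (by rintro _ ⟨a, ha, rfl⟩; exact sub_nonneg.2 (hl a ha)) hp (sub_eq_zero.2 hlp.symm)
  refine (Submodule.span_le (p := (PointedCone.hull R {a ∈ A | l a = f a}).comap
    (LinearMap.fst R E R))).2 ?_ hcontact
  rintro _ ⟨⟨a, ha, rfl⟩, hla⟩
  exact PointedCone.subset_hull ⟨ha, (sub_eq_zero.1 hla).symm⟩

end Hull

lemma hull_singleton_smul {K E : Type*} [Field K] [LinearOrder K] [IsStrictOrderedRing K]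
    [AddCommGroup E] [Module K E] {k : K} (hk : 0 < k) (v : E) :
    PointedCone.hull K {k • v} = PointedCone.hull K {v} := by
  apply le_antisymm <;> rw [Submodule.span_le, Set.singleton_subset_iff]
  · exact PointedCone.smul_mem _ hk.le (PointedCone.subset_hull rfl)
  · exact (PointedCone.smul_mem_iff _ hk).1 (PointedCone.subset_hull rfl)

lemma coneGenBy_eq_hull {E : Type*} [AddCommMonoid E] [Module ℝ E] (A : Set E) :
    coneGenBy A = PointedCone.hull ℝ A := by
  ext x
  constructor
  · rintro ⟨t, c, htA, hc, rfl⟩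
    exact sum_mem fun v hv => PointedCone.smul_mem _ (hc v) (PointedCone.subset_hull (htA hv))
  · intro hx
    obtain ⟨c, hcA, hc, rfl⟩ := PointedCone.mem_hull_set.1 hx
    exact ⟨c.support, c, hcA, hc, rfl⟩

lemma coneHullOf_eq_hull {n : ℕ} (s : Finset (Fin n → ℝ)) :
    coneHullOf s = PointedCone.hull ℝ (s : Set (Fin n → ℝ)) := by
  ext x
  constructor
  · rintro ⟨c, hc, rfl⟩
    exact sum_mem fun v hv => PointedCone.smul_mem _ (hc v) (PointedCone.subset_hull hv)
  · intro hx
    obtain ⟨c, hcs, hc, rfl⟩ := PointedCone.mem_hull_set.1 hx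
    exact ⟨c, hc, Finsupp.sum_of_support_subset c hcs _ fun v _ => zero_smul ℝ v⟩

section LinearIndependent

lemma exists_linearMap_eqOn_of_linearIndepOn {K V W : Type*} [DivisionRing K] [AddCommGroup V]
    [Module K V] [AddCommGroup W] [Module K W] {s : Set V} (hs : LinearIndepOn K id s)
    (g : V → W) : ∃ u : V →ₗ[K] W, Set.EqOn u g s := by
  let b := Module.Basis.extend hs
  refine ⟨b.constr ℕ fun v => g v, fun v hv => ?_⟩
  have hbv : b ⟨v, hs.subset_extend _ hv⟩ = v := Module.Basis.extend_apply_self hs _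
  simpa only [hbv] using b.constr_basis ℕ (fun v => g v) ⟨v, hs.subset_extend _ hv⟩

lemma eq_zero_of_mem_hull_of_neg_mem_hull {K V : Type*} [Field K] [LinearOrder K]
    [IsStrictOrderedRing K] [AddCommGroup V] [Module K V] {s : Set V}
    (hs : LinearIndepOn K id s) {x : V} (hx : x ∈ PointedCone.hull K s)
    (hneg : -x ∈ PointedCone.hull K s) : x = 0 := by
  obtain ⟨u, hu⟩ := exists_linearMap_eqOn_of_linearIndepOn hs (fun _ => (1 : K))
  have hu_nonneg : ∀ v ∈ s, 0 ≤ u v := fun v hv => (hu hv).symm ▸ zero_le_one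
  have hux : u x = 0 := by
    have hux_neg := apply_nonneg_of_mem_hull hu_nonneg hneg
    rw [map_neg, neg_nonneg] at hux_neg
    exact hux_neg.antisymm (apply_nonneg_of_mem_hull hu_nonneg hx)
  have hempty : {v ∈ s | u v = 0} = ∅ :=
    Set.sep_eq_empty_iff_mem_false.2 fun v hv => by simp [hu hv]
  simpa [hempty] using mem_hull_sep_of_apply_eq_zero hu_nonneg hx hux

lemma isClosed_hull_of_linearIndepOn {E : Type*} [AddCommGroup E] [Module ℝ E]
    [TopologicalSpace E] [IsTopologicalAddGroup E] [ContinuousSMul ℝ E] [T2Space E]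
    {s : Set E} (hfin : s.Finite) (hs : LinearIndepOn ℝ id s) :
    IsClosed (PointedCone.hull ℝ s : Set E) := by
  have := hfin.fintype
  let L := Fintype.linearCombination ℝ ((↑) : s → E)
  have hL : Topology.IsClosedEmbedding L :=
    LinearMap.isClosedEmbedding_of_injective
      (LinearMap.ker_eq_bot.2 (linearIndependent_iff_injective_fintypeLinearCombination.1 hs))
  have hrange : PointedCone.hull ℝ s = PointedCone.hull ℝ (Set.range ((↑) : s → E)) := by
    rw [Subtype.range_coe]
  have himage : (PointedCone.hull ℝ s : Set E) = L '' Set.Ici 0 := by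
    ext x
    rw [SetLike.mem_coe, hrange, Submodule.mem_span_range_iff_exists_fun]
    constructor
    · rintro ⟨c, rfl⟩
      exact ⟨fun v => c v, fun v => (c v).2, rfl⟩
    · rintro ⟨c, hc, rfl⟩
      exact ⟨fun v => ⟨c v, hc v⟩, rfl⟩
  rw [himage]
  exact hL.isClosedMap _ isClosed_Ici

lemma isFaceOf_hull_of_subset {n : ℕ} {s t : Set (Fin n → ℝ)} (hs : LinearIndepOn ℝ id s)
    (hts : t ⊆ s) : IsFaceOf (PointedCone.hull ℝ t : Set (Fin n → ℝ)) (PointedCone.hull ℝ s) := by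
  obtain ⟨u, hu⟩ := exists_linearMap_eqOn_of_linearIndepOn hs (tᶜ.indicator fun _ => (1 : ℝ))
  have hu_nonneg : ∀ v ∈ s, 0 ≤ u v := fun v hv =>
    (hu hv).symm ▸ Set.indicator_nonneg (fun _ _ => zero_le_one) v
  have hut : ∀ v ∈ s, u v = 0 ↔ v ∈ t := fun v hv => by simp [hu hv]
  refine ⟨u, fun x hx => apply_nonneg_of_mem_hull hu_nonneg hx, ?_⟩
  refine Set.Subset.antisymm (fun x hx => ⟨Submodule.span_mono hts hx, ?_⟩) ?_
  · exact (Submodule.span_le (p := (⊥ : PointedCone ℝ ℝ).comap u)).2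
      (fun v hv => (hut v (hts hv)).2 hv) hx
  · rintro x ⟨hx, hux⟩
    exact Submodule.span_mono (fun v hv => (hut v hv.1).1 hv.2)
      (mem_hull_sep_of_apply_eq_zero hu_nonneg hx hux)

end LinearIndependent

lemma exists_mem_span_eq_top_of_sUnion_eq_univ (𝕜 : Type*) {E : Type*}
    [NontriviallyNormedField 𝕜] [AddCommGroup E] [Module 𝕜 E] [TopologicalSpace E]
    [ContinuousAdd E] [ContinuousSMul 𝕜 E] [BaireSpace E] {S : Set (Set E)} (hfin : S.Finite)
    (hclosed : ∀ σ ∈ S, IsClosed σ) (hcover : ⋃₀ S = Set.univ) (x : E) :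
    ∃ σ ∈ S, Submodule.span 𝕜 σ = ⊤ ∧ x ∈ σ := by
  have hsub : ⋃ σ ∈ S, interior σ ⊆ ⋃ σ ∈ {σ ∈ S | Submodule.span 𝕜 σ = ⊤}, σ := by
    refine Set.iUnion₂_subset fun σ hσ y hy => Set.mem_biUnion ⟨hσ, ?_⟩ (interior_subset hy)
    exact Submodule.eq_top_of_nonempty_interior' _ ⟨y, interior_mono Submodule.subset_span hy⟩
  have hclosed_full : IsClosed (⋃ σ ∈ {σ ∈ S | Submodule.span 𝕜 σ = ⊤}, σ) :=
    (hfin.subset (Set.sep_subset _ _)).isClosed_biUnion fun σ hσ => hclosed σ hσ.1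
  have hdense := (dense_sUnion_interior_of_closed hclosed hfin.countable hcover).mono hsub
  have hx := hclosed_full.closure_eq ▸ hdense x
  obtain ⟨σ, ⟨hσ, hspan⟩, hxσ⟩ := Set.mem_iUnion₂.1 hx
  exact ⟨σ, hσ, hspan, hxσ⟩

section Primitive

variable {n : ℕ} {v w : Fin n → ℝ}

lemma IsIntegralVec.exists_intCast_eq (hv : IsIntegralVec v) :
    ∃ b : Fin n → ℤ, (fun i => (b i : ℝ)) = v :=
  (Classical.skolem.1 hv).imp fun _ hb => funext fun i => (hb i).symm

lemma gcd_int_nonneg {ι : Type*} (t : Finset ι) (b : ι → ℤ) : 0 ≤ t.gcd b :=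
  Int.nonneg_of_normalize_eq_self Finset.normalize_gcd

lemma isPrimitiveVec_intCast_iff {b : Fin n → ℤ} :
    IsPrimitiveVec (fun i => (b i : ℝ)) ↔ Finset.univ.gcd b = 1 := by
  constructor
  · intro hb
    choose c hc using fun i => Finset.gcd_dvd (f := b) (Finset.mem_univ i)
    lift Finset.univ.gcd b to ℕ using gcd_int_nonneg _ b with m
    have hbc : (fun i => (b i : ℝ)) = (m : ℝ) • fun i => (c i : ℝ) :=
      funext fun i => by simpa using congrArg (Int.cast (R := ℝ)) (hc i)
    exact_mod_cast hb.2 m _ (fun i => ⟨c i, rfl⟩) hbc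
  · refine fun hb => ⟨fun i => ⟨b i, rfl⟩, fun m w hw hmw => ?_⟩
    obtain ⟨c, rfl⟩ := hw.exists_intCast_eq
    have hbc : ∀ i, (b i : ℝ) = m * c i := congrFun hmw
    have hdvd : (m : ℤ) ∣ Finset.univ.gcd b :=
      Finset.dvd_gcd fun i _ => ⟨c i, by exact_mod_cast hbc i⟩
    exact Nat.dvd_one.1 (by exact_mod_cast hb ▸ hdvd)

lemma IsPrimitiveVec.ne_zero (hv : IsPrimitiveVec v) : v ≠ 0 := by
  rintro rfl
  exact zero_ne_one (hv.2 0 0 hv.1 (smul_zero _).symm)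

lemma IsPrimitiveVec.eq_of_mem_hull_singleton (hv : IsPrimitiveVec v) (hw : IsPrimitiveVec w)
    (hwv : w ∈ PointedCone.hull ℝ {v}) : w = v := by
  obtain ⟨t, ht, hwt⟩ := mem_hull_singleton.1 hwv
  obtain ⟨i, hi⟩ := Function.ne_iff.1 hv.ne_zero
  obtain ⟨b, rfl⟩ := hv.1.exists_intCast_eq
  obtain ⟨a, rfl⟩ := hw.1.exists_intCast_eq
  have ha : ∀ j, (a j : ℝ) = t * b j := congrFun hwt
  have hcross : ∀ j, b i * a j = a i * b j := fun j => by
    have : (b i : ℝ) * a j = a i * b j := by rw [ha i, ha j]; ring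
    exact_mod_cast this
  have habs : |b i| = |a i| := by
    simpa only [Finset.gcd_mul_left, isPrimitiveVec_intCast_iff.1 hv,
      isPrimitiveVec_intCast_iff.1 hw, mul_one, Int.abs_eq_normalize]
      using congrArg Finset.univ.gcd (funext hcross)
  have ht_one : t = 1 := by
    have : |(b i : ℝ)| = t * |(b i : ℝ)| := by
      calc |(b i : ℝ)| = |(a i : ℝ)| := by exact_mod_cast habs
        _ = t * |(b i : ℝ)| := by rw [ha i, abs_mul, abs_of_nonneg ht]
    exact (mul_eq_right₀ (abs_ne_zero.2 hi)).1 this.symm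
  rw [hwt, ht_one, one_smul]

lemma IsIntegralVec.exists_isPrimitiveVec_hull_eq (hv : IsIntegralVec v) (hv0 : v ≠ 0) :
    ∃ p, IsPrimitiveVec p ∧ PointedCone.hull ℝ {p} = PointedCone.hull ℝ {v} := by
  obtain ⟨i, hi⟩ := Function.ne_iff.1 hv0
  obtain ⟨b, rfl⟩ := hv.exists_intCast_eq
  obtain ⟨c, hbc, hc⟩ := Finset.extract_gcd b ⟨i, Finset.mem_univ i⟩
  have hgcd_pos : 0 < Finset.univ.gcd b :=
    (gcd_int_nonneg _ b).lt_of_ne' fun hzero =>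
      hi (by simp [Finset.gcd_eq_zero_iff.1 hzero i (Finset.mem_univ i)])
  refine ⟨fun j => (c j : ℝ), isPrimitiveVec_intCast_iff.2 hc, ?_⟩
  rw [← hull_singleton_smul (Int.cast_pos.2 hgcd_pos)]
  congr 2
  funext j
  simp [hbc j (Finset.mem_univ j)]

end Primitive

section Fan

variable {n : ℕ} {S : Set (Set (Fin n → ℝ))} {σ : Set (Fin n → ℝ)} {x δ : Fin n → ℝ}

lemma mem_fanRays_iff :
    δ ∈ fanRays S ↔ IsPrimitiveVec δ ∧ (PointedCone.hull ℝ {δ} : Set (Fin n → ℝ)) ∈ S := by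
  have hray : {x | ∃ t : ℝ, 0 ≤ t ∧ x = t • δ} = (PointedCone.hull ℝ {δ} : Set (Fin n → ℝ)) :=
    Set.ext fun _ => mem_hull_singleton.symm
  rw [← hray]
  rfl

namespace IsCompleteFan

lemma exists_linearIndepOn_hull (hS : IsCompleteFan S) (hσ : σ ∈ S) :
    ∃ s : Set (Fin n → ℝ), s.Finite ∧ (∀ v ∈ s, IsIntegralVec v) ∧ LinearIndepOn ℝ id s ∧
      σ = PointedCone.hull ℝ s := by
  obtain ⟨s, hint, hs, rfl⟩ := hS.simplicial σ hσ
  exact ⟨s, s.finite_toSet, hint, hs, coneHullOf_eq_hull s⟩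

lemma exists_mem_span_eq_top (hS : IsCompleteFan S) (x : Fin n → ℝ) :
    ∃ σ ∈ S, Submodule.span ℝ σ = ⊤ ∧ x ∈ σ := by
  refine exists_mem_span_eq_top_of_sUnion_eq_univ ℝ hS.finite (fun σ hσ => ?_) hS.complete x
  obtain ⟨s, hfin, -, hs, rfl⟩ := hS.exists_linearIndepOn_hull hσ
  exact isClosed_hull_of_linearIndepOn hfin hs

lemma eq_zero_of_neg_mem (hS : IsCompleteFan S) (hσ : σ ∈ S) (hx : x ∈ σ) (hneg : -x ∈ σ) :
    x = 0 := by
  obtain ⟨s, -, -, hs, rfl⟩ := hS.exists_linearIndepOn_hull hσ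
  exact eq_zero_of_mem_hull_of_neg_mem_hull hs hx hneg

lemma mem_hull_fanRays_inter (hS : IsCompleteFan S) (hσ : σ ∈ S) (hx : x ∈ σ) :
    x ∈ PointedCone.hull ℝ (fanRays S ∩ σ) := by
  obtain ⟨s, -, hint, hs, rfl⟩ := hS.exists_linearIndepOn_hull hσ
  refine Submodule.span_le.2 (fun v hv => ?_) hx
  obtain ⟨p, hp, hpv⟩ := (hint v hv).exists_isPrimitiveVec_hull_eq (hs.ne_zero hv)
  have hp_mem : p ∈ PointedCone.hull ℝ {v} := hpv.le (PointedCone.subset_hull rfl)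
  have hv_mem : v ∈ PointedCone.hull ℝ {p} := hpv.ge (PointedCone.subset_hull rfl)
  have hp_ray : p ∈ fanRays S := by
    refine mem_fanRays_iff.2 ⟨hp, ?_⟩
    rw [hpv]
    exact hS.face_mem _ hσ _ (isFaceOf_hull_of_subset hs (Set.singleton_subset_iff.2 hv))
  have hsub : {p} ⊆ fanRays S ∩ PointedCone.hull ℝ s :=
    Set.singleton_subset_iff.2
      ⟨hp_ray, Submodule.span_mono (Set.singleton_subset_iff.2 hv) hp_mem⟩
  exact Submodule.span_mono hsub hv_mem

lemma notMem_hull_fanRays_inter_diff (hS : IsCompleteFan S) (hσ : σ ∈ S) (hδ : δ ∈ fanRays S)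
    (hδσ : δ ∈ σ) : δ ∉ PointedCone.hull ℝ ((fanRays S ∩ σ) \ {δ}) := by
  obtain ⟨hδ_prim, hδ_ray⟩ := mem_fanRays_iff.1 hδ
  obtain ⟨u, hu, hface⟩ := (hS.inter_face σ hσ _ hδ_ray).1
  have huδ : u δ = 0 :=
    (hface.subset ⟨hδσ, PointedCone.subset_hull (Set.mem_singleton δ)⟩).2
  have hempty : {a ∈ (fanRays S ∩ σ) \ {δ} | u a = 0} = ∅ := by
    refine Set.sep_eq_empty_iff_mem_false.2 fun a ⟨⟨ha, haσ⟩, hne⟩ hua => hne ?_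
    have ha_ray := (hface.superset ⟨haσ, hua⟩).2
    exact hδ_prim.eq_of_mem_hull_singleton ha.1 ha_ray
  intro hmem
  have := mem_hull_sep_of_apply_eq_zero (fun a ha => hu a ha.1.2) hmem huδ
  rw [hempty] at this
  exact hδ_prim.ne_zero (by simpa using this)

end IsCompleteFan

end Fan

/-- Strict convexity of `f` with respect to a fan `S`, encoded pointwise: at every point there is a
supporting linear functional of `f` whose contact set is a cone of `S`. -/
def IsStrictlyConvexOnFan {E : Type*} [AddCommGroup E] [Module ℝ E] (S : Set (Set E))
    (f : E → ℝ) : Prop :=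
  ∀ x, ∃ l : E →ₗ[ℝ] ℝ, (∀ y, l y ≤ f y) ∧ l x = f x ∧ {y | l y = f y} ∈ S

namespace IsStrictlyConvexOnFan

variable {n : ℕ} {S : Set (Set (Fin n → ℝ))} {f : (Fin n → ℝ) → ℝ}

lemma add_apply_neg_pos (hf : IsStrictlyConvexOnFan S f) (hS : IsCompleteFan S) {x : Fin n → ℝ}
    (hx : x ≠ 0) : 0 < f x + f (-x) := by
  obtain ⟨l, hle, hlx, hcontact⟩ := hf x
  have hlt : l (-x) < f (-x) :=
    (hle (-x)).lt_of_ne fun hneg => hx (hS.eq_zero_of_neg_mem hcontact hlx hneg)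
  rw [map_neg, hlx] at hlt
  linarith

lemma graph_mem_hull (hf : IsStrictlyConvexOnFan S f) (hS : IsCompleteFan S) (x : Fin n → ℝ) :
    (x, f x) ∈ PointedCone.hull ℝ ((fun δ => (δ, f δ)) '' fanRays S) := by
  obtain ⟨l, -, hlx, hcontact⟩ := hf x
  have hx := prodMk_apply_mem_hull_graph (fun δ hδ => hδ.2) (hS.mem_hull_fanRays_inter hcontact hlx)
  rw [hlx] at hx
  exact Submodule.span_mono (Set.image_mono Set.inter_subset_left) hx

lemma vertical_mem_hull [Nonempty (Fin n)] (hf : IsStrictlyConvexOnFan S f)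
    (hS : IsCompleteFan S) :
    ((0 : Fin n → ℝ), (1 : ℝ)) ∈ PointedCone.hull ℝ ((fun δ => (δ, f δ)) '' fanRays S) := by
  obtain ⟨x, hx⟩ := exists_ne (0 : Fin n → ℝ)
  have hpos := hf.add_apply_neg_pos hS hx
  rw [← PointedCone.smul_mem_iff _ hpos]
  simpa using add_mem (hf.graph_mem_hull hS x) (hf.graph_mem_hull hS (-x))

theorem epigraphOf_eq_hull [Nonempty (Fin n)] (hf : IsStrictlyConvexOnFan S f)
    (hS : IsCompleteFan S) :
    epigraphOf f = PointedCone.hull ℝ ((fun δ => (δ, f δ)) '' fanRays S) := by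
  refine Set.Subset.antisymm (fun ⟨x, α⟩ hα => ?_) fun p hp => ?_
  · have hsum : (x, α) = (x, f x) + (α - f x) • ((0 : Fin n → ℝ), (1 : ℝ)) := by simp
    rw [hsum]
    exact add_mem (hf.graph_mem_hull hS x)
      (PointedCone.smul_mem _ (sub_nonneg.2 hα) (hf.vertical_mem_hull hS))
  · obtain ⟨l, hle, hlp, -⟩ := hf p.1
    exact hlp.symm.trans_le (apply_fst_le_snd_of_mem_hull_graph (fun δ _ => hle δ) hp)

theorem graph_notMem_hull_diff (hf : IsStrictlyConvexOnFan S f) (hS : IsCompleteFan S)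
    {δ₀ : Fin n → ℝ} (hδ₀ : δ₀ ∈ fanRays S) :
    (δ₀, f δ₀) ∉ PointedCone.hull ℝ ((fun δ => (δ, f δ)) '' (fanRays S \ {δ₀})) := by
  intro hmem
  obtain ⟨l, hle, hlδ₀, hcontact⟩ := hf δ₀
  have hsub : {δ ∈ fanRays S \ {δ₀} | l δ = f δ} ⊆ (fanRays S ∩ {y | l y = f y}) \ {δ₀} :=
    fun δ ⟨⟨hδ, hne⟩, hlδ⟩ => ⟨⟨hδ, hlδ⟩, hne⟩
  exact hS.notMem_hull_fanRays_inter_diff hcontact hδ₀ hlδ₀ <| Submodule.span_mono hsub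
    (fst_mem_hull_of_mem_hull_graph (fun δ _ => hle δ) hmem hlδ₀)

end IsStrictlyConvexOnFan

theorem statement5_general {n : ℕ} (hn : 1 ≤ n) (S : Set (Set (Fin n → ℝ)))
    (hS : IsCompleteFan S) (ρ : (Fin n → ℝ) → ℝ) (f : (Fin n → ℝ) → ℝ)
    (hflin : ∀ σ ∈ S, ∃ l : (Fin n → ℝ) →ₗ[ℝ] ℝ, ∀ x ∈ σ, f x = l x)
    (hfval : ∀ δ ∈ fanRays S, f δ = ρ δ)
    (hconv : ∀ σ ∈ S, Submodule.span ℝ σ = ⊤ →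
      ∀ l : (Fin n → ℝ) →ₗ[ℝ] ℝ, (∀ δ ∈ fanRays S, δ ∈ σ → l δ = ρ δ) →
        ∀ x, l x ≤ f x ∧ (l x = f x ↔ x ∈ σ)) :
    epigraphOf f = coneGenBy ((fun δ => (δ, ρ δ)) '' fanRays S) ∧
    ∀ δ₀ ∈ fanRays S, (δ₀, ρ δ₀) ∉ coneGenBy ((fun δ => (δ, ρ δ)) '' (fanRays S \ {δ₀})) := by
  have : Nonempty (Fin n) := ⟨⟨0, hn⟩⟩
  have hf : IsStrictlyConvexOnFan S f := fun x => by
    obtain ⟨σ, hσ, hspan, hxσ⟩ := hS.exists_mem_span_eq_top x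
    obtain ⟨l, hl⟩ := hflin σ hσ
    have hsupp := hconv σ hσ hspan l fun δ hδ hδσ => (hl δ hδσ).symm.trans (hfval δ hδ)
    have hcontact : {y | l y = f y} = σ := Set.ext fun y => (hsupp y).2
    exact ⟨l, fun y => (hsupp y).1, (hl x hxσ).symm, hcontact.symm ▸ hσ⟩
  have hgraph : ∀ A ⊆ fanRays S, (fun δ => (δ, ρ δ)) '' A = (fun δ => (δ, f δ)) '' A :=
    fun A hA => Set.image_congr fun δ hδ => by rw [hfval δ (hA hδ)]
  simp only [coneGenBy_eq_hull]
  refine ⟨?_, fun δ₀ hδ₀ => ?_⟩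
  · rw [hgraph _ subset_rfl, hf.epigraphOf_eq_hull hS]
  · rw [hgraph _ Set.sdiff_subset, ← hfval δ₀ hδ₀]
    exact hf.graph_notMem_hull_diff hS hδ₀

/-- For a complete simplicial rational fan `S` in `ℝⁿ` (`n ≥ 1`) and
nonnegative integers `ρ_δ`, not all zero: if `ρ` is strictly convex, then the epigraph
`C_ρ` equals the convex cone generated by the vectors `(δ, ρ_δ)`, `δ ∈ Σ¹`, and this
generating set is irredundant: no `(δ₀, ρ_{δ₀})` lies in the cone generated by the
remaining vectors. -/
theorem statement5 {n : ℕ} (hn : 1 ≤ n) (S : Set (Set (Fin n → ℝ)))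
    (hS : IsCompleteFan S) (ρ : (Fin n → ℝ) → ℕ)
    (hρ : ∃ δ ∈ fanRays S, ρ δ ≠ 0)
    (f : (Fin n → ℝ) → ℝ)
    (hflin : ∀ σ ∈ S, ∃ l : (Fin n → ℝ) →ₗ[ℝ] ℝ, ∀ x ∈ σ, f x = l x)
    (hfval : ∀ δ ∈ fanRays S, f δ = (ρ δ : ℝ))
    (hconv : RhoIsStrictlyConvex S ρ f) :
    epigraphOf f = coneGenBy ((fun δ => (δ, (ρ δ : ℝ))) '' fanRays S) ∧
    ∀ δ₀ ∈ fanRays S,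
      (δ₀, (ρ δ₀ : ℝ)) ∉ coneGenBy ((fun δ => (δ, (ρ δ : ℝ))) '' (fanRays S \ {δ₀})) :=
  statement5_general hn S hS (fun δ => (ρ δ : ℝ)) f hflin hfval hconv
end

section
/- Let m ≥ 2, let n_1, …, n_m be positive real numbers, and let ρ_1, …, ρ_m be nonnegative real numbers with Σ_k n_k ρ_k > 0. Let H := {y ∈ ℝ^m : Σ_i n_i y_i = 0} and P := {y ∈ H : y_i ≥ −ρ_i for all i}. For 1 ≤ j ≤ m define a_j ∈ ℝ^m by (a_j)_i = −ρ_i for i ≠ j and (a_j)_j = (Σ_{k ≠ j} n_k ρ_k)/n_j. Then P is the convex hull of {a_1, …, a_m}. Moreover, if all n_i and ρ_i are integers, then all the points a_1, …, a_m lie in ℤ^m if and only if n_j divides Σ_k n_k ρ_k for every j. -/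
/-!
Translating by `ρ` turns `P` into the set of `x ≥ 0` with `∑ i, n i * x i = S`, where
`S = ∑ k, n k * ρ k`. This is the image of the standard simplex under the diagonal linear map
with entries `S / n i`, so it is the convex hull of the points `(S / n j) • e j`, and translating
back by `-ρ` gives the points `a j`. For integral data, the only coordinate of `a j` that can fail
to be an integer is the `j`-th one, whose numerator differs from `S` by the multiple
`n j * ρ j` of `n j`.
-/

open scoped Pointwise

theorem exists_intCast_eq_div_iff_dvd {K : Type*} [DivisionRing K] [CharZero K] {a b : ℤ}
    (hb : b ≠ 0) : (∃ z : ℤ, (a / b : K) = z) ↔ b ∣ a := by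
  simp only [div_eq_iff (Int.cast_ne_zero.2 hb : (b : K) ≠ 0), dvd_def, mul_comm b]
  norm_cast

section OrderedRing

variable {𝕜 ι : Type*} [Ring 𝕜] [Fintype ι]

/-- The simplex cut out of the nonnegative orthant by the hyperplane `∑ i, n i * x i = c`. -/
def weightedSimplex [PartialOrder 𝕜] (n : ι → 𝕜) (c : 𝕜) : Set (ι → 𝕜) :=
  {x | (∀ i, 0 ≤ x i) ∧ ∑ i, n i * x i = c}

/-- The polytope `Δ(L*)_ρ` of sections of the orbifold line bundle given by `ρ` on the weighted
projective space with weights `n`. -/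
def sectionPolytope [PartialOrder 𝕜] (n ρ : ι → 𝕜) : Set (ι → 𝕜) :=
  {y | ∑ i, n i * y i = 0 ∧ ∀ i, -ρ i ≤ y i}

theorem sectionPolytope_eq_vadd_weightedSimplex [PartialOrder 𝕜] [IsOrderedAddMonoid 𝕜]
    (n ρ : ι → 𝕜) :
    sectionPolytope n ρ = -ρ +ᵥ weightedSimplex n (∑ k, n k * ρ k) := by
  ext y
  simp [sectionPolytope, weightedSimplex, Set.mem_vadd_set_iff_neg_vadd_mem, mul_add,
    Finset.sum_add_distrib, neg_le_iff_add_nonneg', and_comm]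

theorem weightedSimplex_zero [LinearOrder 𝕜] [IsStrictOrderedRing 𝕜] {n : ι → 𝕜}
    (hn : ∀ i, 0 < n i) : weightedSimplex n 0 = {0} := by
  refine Set.eq_singleton_iff_unique_mem.2
    ⟨⟨fun _ => le_rfl, by simp⟩, fun x hx => funext fun i => ?_⟩
  have hterms := (Finset.sum_eq_zero_iff_of_nonneg
    fun i _ => mul_nonneg (hn i).le (hx.1 i)).1 hx.2
  exact (mul_eq_zero.1 (hterms i (Finset.mem_univ i))).resolve_left (hn i).ne'

end OrderedRing

section ConvexHull

variable {𝕜 ι : Type*} [Field 𝕜] [LinearOrder 𝕜] [IsStrictOrderedRing 𝕜] [Fintype ι]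

theorem div_mul_mem_weightedSimplex {n w : ι → 𝕜} {c : 𝕜} (hn : ∀ i, 0 < n i) (hc : 0 ≤ c)
    (hw : w ∈ stdSimplex 𝕜 ι) : (fun i => c / n i * w i) ∈ weightedSimplex n c := by
  refine ⟨fun i => mul_nonneg (div_nonneg hc (hn i).le) (hw.1 i), ?_⟩
  calc ∑ i, n i * (c / n i * w i) = ∑ i, c * w i :=
        Finset.sum_congr rfl fun i _ => by rw [← mul_assoc, mul_div_cancel₀ _ (hn i).ne']
    _ = c := by rw [← Finset.mul_sum, hw.2, mul_one]

theorem mul_div_mem_stdSimplex {n x : ι → 𝕜} {c : 𝕜} (hn : ∀ i, 0 < n i) (hc : 0 < c)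
    (hx : x ∈ weightedSimplex n c) : (fun i => n i * x i / c) ∈ stdSimplex 𝕜 ι :=
  ⟨fun i => div_nonneg (mul_nonneg (hn i).le (hx.1 i)) hc.le, by
    rw [← Finset.sum_div, hx.2, div_self hc.ne']⟩

theorem image_mulLeft_stdSimplex [Nonempty ι] {n : ι → 𝕜} {c : 𝕜} (hn : ∀ i, 0 < n i)
    (hc : 0 ≤ c) :
    LinearMap.mulLeft 𝕜 (fun i => c / n i) '' stdSimplex 𝕜 ι = weightedSimplex n c := by
  classical
  refine (Set.image_subset_iff.2 fun w => div_mul_mem_weightedSimplex hn hc).antisymm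
    fun x hx => ?_
  obtain rfl | hc := hc.eq_or_lt
  · rw [weightedSimplex_zero hn] at hx
    refine ⟨_, single_mem_stdSimplex 𝕜 (Classical.arbitrary ι), ?_⟩
    ext i
    simp [Set.mem_singleton_iff.1 hx]
  · refine ⟨_, mul_div_mem_stdSimplex hn hc hx, funext fun i => ?_⟩
    simp [field, hc.ne', (hn i).ne']

theorem weightedSimplex_eq_convexHull [DecidableEq ι] [Nonempty ι] {n : ι → 𝕜} {c : 𝕜}
    (hn : ∀ i, 0 < n i) (hc : 0 ≤ c) :
    weightedSimplex n c = convexHull 𝕜 (Set.range fun j => Pi.single j (c / n j)) := by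
  rw [← image_mulLeft_stdSimplex hn hc, ← convexHull_rangle_single_eq_stdSimplex,
    LinearMap.image_convexHull, ← Set.range_comp]
  congr! with j
  simp [← Pi.single_mul_right]

end ConvexHull

section Vertex

variable {𝕜 ι : Type*} [Field 𝕜] [Fintype ι] [DecidableEq ι]

/-- The point `a_j` with coordinates `-ρ i` for `i ≠ j`, whose `j`-th coordinate places it on the
hyperplane `∑ i, n i * y i = 0` when `n j ≠ 0`. -/
def sectionVertex (n ρ : ι → 𝕜) (j : ι) : ι → 𝕜 :=
  Function.update (-ρ) j ((∑ k ∈ Finset.univ.erase j, n k * ρ k) / n j)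

theorem sectionVertex_eq_vadd_single {n : ι → 𝕜} (ρ : ι → 𝕜) {j : ι} (hj : n j ≠ 0) :
    sectionVertex n ρ j = -ρ +ᵥ Pi.single j ((∑ k, n k * ρ k) / n j) := by
  ext i
  obtain rfl | hij := eq_or_ne i j
  · simp only [sectionVertex, Function.update_self, vadd_eq_add, Pi.add_apply, Pi.neg_apply,
      Pi.single_eq_same, ← Finset.add_sum_erase _ _ (Finset.mem_univ i)]
    field_simp
    ring
  · simp [sectionVertex, hij]

theorem sectionPolytope_eq_convexHull [LinearOrder 𝕜] [IsStrictOrderedRing 𝕜] [Nonempty ι]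
    {n ρ : ι → 𝕜} (hn : ∀ i, 0 < n i) (hsum : 0 ≤ ∑ k, n k * ρ k) :
    sectionPolytope n ρ = convexHull 𝕜 (Set.range (sectionVertex n ρ)) := by
  rw [sectionPolytope_eq_vadd_weightedSimplex, weightedSimplex_eq_convexHull hn hsum,
    ← convexHull_vadd, Set.vadd_set_range]
  simp only [← sectionVertex_eq_vadd_single ρ (hn _).ne']

theorem sectionVertex_integral_iff [CharZero 𝕜] {N : ι → ℤ} (R : ι → ℤ) {j : ι} (hj : N j ≠ 0) :
    (∀ i, ∃ z : ℤ, sectionVertex (fun k => (N k : 𝕜)) (fun k => (R k : 𝕜)) j i = z) ↔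
      N j ∣ ∑ k, N k * R k := by
  have integral_iff_at_j :
      (∃ z : ℤ, sectionVertex (fun k => (N k : 𝕜)) (fun k => (R k : 𝕜)) j j = z) ↔
        N j ∣ ∑ k, N k * R k := by
    rw [← Finset.add_sum_erase _ _ (Finset.mem_univ j), dvd_add_right (dvd_mul_right _ _),
      ← exists_intCast_eq_div_iff_dvd (K := 𝕜) hj]
    simp [sectionVertex]
  refine ⟨fun h => integral_iff_at_j.1 (h j), fun h i => ?_⟩
  obtain rfl | hij := eq_or_ne i j
  · exact integral_iff_at_j.2 h
  · exact ⟨-R i, by simp [sectionVertex, hij]⟩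

theorem statement14_general [LinearOrder 𝕜] [IsStrictOrderedRing 𝕜] [Nonempty ι] {n ρ : ι → 𝕜}
    (hn : ∀ i, 0 < n i) (hsum : 0 ≤ ∑ k, n k * ρ k) :
    sectionPolytope n ρ = convexHull 𝕜 (Set.range (sectionVertex n ρ)) ∧
    ∀ N R : ι → ℤ, (∀ i, n i = N i) → (∀ i, ρ i = R i) →
      ((∀ j i, ∃ z : ℤ, sectionVertex n ρ j i = z) ↔ ∀ j, N j ∣ ∑ k, N k * R k) := by
  refine ⟨sectionPolytope_eq_convexHull hn hsum, fun N R hN hR => forall_congr' fun j => ?_⟩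
  obtain rfl : n = fun i => (N i : 𝕜) := funext hN
  obtain rfl : ρ = fun i => (R i : 𝕜) := funext hR
  exact sectionVertex_integral_iff R (Int.cast_ne_zero.1 (hn j).ne')

end Vertex

/-- Let `m ≥ 2`, `n_i > 0`, `ρ_i ≥ 0` with `Σ n_k ρ_k > 0`. Let
`P = {y : Σ n_i y_i = 0, y_i ≥ −ρ_i}` and let `a_j` have coordinates `−ρ_i` for `i ≠ j`
and `(Σ_{k ≠ j} n_k ρ_k)/n_j` at `j`. Then `P = conv{a_1, …, a_m}`; moreover, if all
`n_i, ρ_i` are integers, then all `a_j` are lattice points iff `n_j ∣ Σ n_k ρ_k` for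
every `j`. -/
theorem statement14 {m : ℕ} (hm : 2 ≤ m) (nn ρ : Fin m → ℝ)
    (hn : ∀ i, 0 < nn i) (hρ : ∀ i, 0 ≤ ρ i)
    (hsum : 0 < ∑ k, nn k * ρ k)
    (P : Set (Fin m → ℝ))
    (hP : P = {y | (∑ i, nn i * y i = 0) ∧ ∀ i, -ρ i ≤ y i})
    (a : Fin m → Fin m → ℝ)
    (ha : ∀ j i, a j i =
      if i = j then (∑ k ∈ Finset.univ.erase j, nn k * ρ k) / nn j else -ρ i) :
    P = convexHull ℝ (Set.range a) ∧
    ∀ N R : Fin m → ℤ, (∀ i, nn i = (N i : ℝ)) → (∀ i, ρ i = (R i : ℝ)) →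
      ((∀ j i, ∃ z : ℤ, a j i = (z : ℝ)) ↔ ∀ j, N j ∣ ∑ k, N k * R k) := by
  have : Nonempty (Fin m) := ⟨⟨0, by lia⟩⟩
  obtain rfl : a = sectionVertex nn ρ := by ext j i; simp [ha, sectionVertex, Function.update_apply]
  exact hP ▸ statement14_general hn hsum.le
end

section
/- Let C ⊆ ℝⁿ × ℝ be a closed convex cone, let v ∈ ℝⁿ be such that (v, 1) lies in the dual cone C*, and let τ := {z ∈ C : ⟨z, (v,1)⟩ = 0} be the face of C annihilated by (v,1). Assume that the dual face of τ is exactly the ray through (v,1), i.e. {y ∈ C* : ⟨t, y⟩ = 0 for all t ∈ τ} = {λ·(v,1) : λ ≥ 0}. Then for every t in the relative interior of τ and every x ∈ ℝⁿ with (x, 1) ∈ C*, one has ⟨t, (x,1)⟩ ≥ 0, with equality if and only if x = v. -/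
/-- The product inner product on `ℝⁿ × ℝ`:
`⟨(x, α), (y, β)⟩ = ⟨x, y⟩ + α·β` with the standard inner product on `ℝⁿ`. -/
def pairWith {n : ℕ} (z y : (Fin n → ℝ) × ℝ) : ℝ :=
  (∑ i, z.1 i * y.1 i) + z.2 * y.2

/-! A linear functional which is nonnegative on a set and vanishes at a relative interior point
vanishes on the whole set: a segment from that point to any other point of the set can be extended
slightly backwards, and a negative value would appear there. Hence `⟨t, (x, 1)⟩ = 0` already puts
`(x, 1)` in the dual face of `τ`, and the last coordinate singles out `(v, 1)` on its line. -/

open Filter PointedCone Submodule Topology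

section IntrinsicInterior

variable {V P : Type*} [AddCommGroup V] [TopologicalSpace V] [TopologicalSpace P] [AddTorsor V P]
  [IsTopologicalAddTorsor P]

theorem eventually_lineMap_mem_of_mem_intrinsicInterior {R : Type*} [Ring R] [TopologicalSpace R]
    [Module R V] [ContinuousSMul R V] {S : Set P} {a b : P} (ha : a ∈ intrinsicInterior R S)
    (hb : b ∈ affineSpan R S) :
    ∀ᶠ c in 𝓝 (0 : R), AffineMap.lineMap a b c ∈ S := by
  obtain ⟨a, ha, rfl⟩ := mem_intrinsicInterior.1 ha
  let line (c : R) : affineSpan R S :=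
    ⟨AffineMap.lineMap (a : P) b c, AffineMap.lineMap_mem c a.2 hb⟩
  have line_zero : line 0 = a := Subtype.ext (AffineMap.lineMap_apply_zero _ _)
  have continuous_line : Continuous line := AffineMap.lineMap_continuous.subtype_mk _
  have preimage_mem_nhds : ((↑) ⁻¹' S : Set (affineSpan R S)) ∈ 𝓝 (line 0) := by
    rwa [line_zero, ← mem_interior_iff_mem_nhds]
  exact continuous_line.continuousAt preimage_mem_nhds

theorem affineMap_eq_of_isMinOn_of_mem_intrinsicInterior {𝕜 : Type*} [Field 𝕜] [LinearOrder 𝕜]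
    [IsStrictOrderedRing 𝕜] [TopologicalSpace 𝕜] [OrderTopology 𝕜] [Module 𝕜 V]
    [ContinuousSMul 𝕜 V] {S : Set P} {a b : P} (f : P →ᵃ[𝕜] 𝕜) (hf : IsMinOn f S a)
    (ha : a ∈ intrinsicInterior 𝕜 S) (hb : b ∈ S) :
    f b = f a := by
  obtain ⟨c, hc, hmem⟩ :=
    (eventually_lineMap_mem_of_mem_intrinsicInterior ha (subset_affineSpan 𝕜 S hb)).exists_lt
  have mul_sub_nonneg : 0 ≤ c * (f b - f a) := by
    simpa [AffineMap.apply_lineMap, AffineMap.lineMap_apply] using isMinOn_iff.1 hf _ hmem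
  have sub_le_zero : f b - f a ≤ 0 := nonpos_of_mul_nonneg_right mul_sub_nonneg hc
  exact le_antisymm (sub_nonpos.1 sub_le_zero) (isMinOn_iff.1 hf b hb)

end IntrinsicInterior

theorem eq_of_mk_one_mem_span_mk_one {R N : Type*} [Semiring R] [AddCommMonoid N] [Module R N]
    {x v : N} (h : (x, (1 : R)) ∈ span R {(v, (1 : R))}) : x = v := by
  obtain ⟨c, hc⟩ := mem_span_singleton.1 h
  obtain ⟨hx, hc⟩ : c • v = x ∧ c = 1 := by simpa using hc
  rw [← hx, hc, one_smul]

section Faces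

variable {R M N : Type*} [CommSemiring R] [PartialOrder R] [IsOrderedRing R]
  [AddCommMonoid M] [Module R M] [AddCommMonoid N] [Module R N]

/-- The part of `C` annihilated by `y` under a bilinear pairing `p`; this is a face of `C` when `C`
is convex and `y` lies in its dual cone. -/
def annihilatedFace (p : M →ₗ[R] N →ₗ[R] R) (C : Set M) (y : N) : Set M :=
  {z ∈ C | p z y = 0}

/-- The dual face of a subset `τ` of `C`: the part of the dual cone of `C`, taken with respect to a
bilinear pairing `p`, that annihilates `τ`. -/
def dualFace (p : M →ₗ[R] N →ₗ[R] R) (C τ : Set M) : Set N :=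
  {y | y ∈ dual p C ∧ ∀ t ∈ τ, p t y = 0}

end Faces

section Pairing

variable {𝕜 M N : Type*} [Field 𝕜] [LinearOrder 𝕜] [IsStrictOrderedRing 𝕜] [TopologicalSpace 𝕜]
  [OrderTopology 𝕜] [AddCommGroup M] [Module 𝕜 M] [TopologicalSpace M] [IsTopologicalAddGroup M]
  [ContinuousSMul 𝕜 M] [AddCommGroup N] [Module 𝕜 N]

theorem mem_dualFace_iff_of_mem_intrinsicInterior {p : M →ₗ[𝕜] N →ₗ[𝕜] 𝕜} {C τ : Set M}
    (hτ : τ ⊆ C) {t : M} (ht : t ∈ intrinsicInterior 𝕜 τ) {y : N} (hy : y ∈ dual p C) :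
    y ∈ dualFace p C τ ↔ p t y = 0 := by
  refine ⟨fun h ↦ h.2 t (intrinsicInterior_subset ht), fun h ↦ ⟨hy, fun s hs ↦ ?_⟩⟩
  have hmin : IsMinOn (p.flip y) τ t := isMinOn_iff.2 fun z hz ↦ h.trans_le (hy (hτ hz))
  exact (affineMap_eq_of_isMinOn_of_mem_intrinsicInterior (p.flip y).toAffineMap hmin ht hs).trans h

theorem statement15_general {p : M →ₗ[𝕜] N × 𝕜 →ₗ[𝕜] 𝕜} {C : Set M} {v : N}
    (hdualface : dualFace p C (annihilatedFace p C (v, 1)) ⊆ span 𝕜 {(v, (1 : 𝕜))})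
    {t : M} (ht : t ∈ intrinsicInterior 𝕜 (annihilatedFace p C (v, 1)))
    {x : N} (hx : (x, 1) ∈ dual p C) :
    0 ≤ p t (x, 1) ∧ (p t (x, 1) = 0 ↔ x = v) := by
  have htτ : t ∈ annihilatedFace p C (v, 1) := intrinsicInterior_subset ht
  refine ⟨hx htτ.1, fun h ↦ ?_, fun h ↦ h ▸ htτ.2⟩
  exact eq_of_mk_one_mem_span_mk_one <| hdualface <|
    (mem_dualFace_iff_of_mem_intrinsicInterior (Set.sep_subset _ _) ht hx).2 h

end Pairing

/-- The pairing `pairWith` as a bilinear map, the form in which it induces dual cones and faces. -/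
def pairWithBilin (n : ℕ) : ((Fin n → ℝ) × ℝ) →ₗ[ℝ] ((Fin n → ℝ) × ℝ) →ₗ[ℝ] ℝ :=
  LinearMap.mk₂ ℝ pairWith
    (fun _ _ _ ↦ by simp [pairWith, add_mul, Finset.sum_add_distrib, add_add_add_comm])
    (fun _ _ _ ↦ by simp [pairWith, mul_add, Finset.mul_sum, mul_assoc])
    (fun _ _ _ ↦ by simp [pairWith, mul_add, Finset.sum_add_distrib, add_add_add_comm])
    (fun _ _ _ ↦ by simp [pairWith, mul_add, Finset.mul_sum, mul_left_comm])

/-- Let `C ⊆ ℝⁿ × ℝ` be a closed convex cone, `v ∈ ℝⁿ` with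
`(v, 1) ∈ C*`, and `τ = {z ∈ C : ⟨z, (v,1)⟩ = 0}` the face of `C` annihilated by `(v,1)`.
If the dual face of `τ` is exactly the ray through `(v, 1)`, then for every `t` in the
relative interior of `τ` and every `x` with `(x, 1) ∈ C*`, one has `⟨t, (x,1)⟩ ≥ 0`, with
equality iff `x = v`. -/
theorem statement15 {n : ℕ} (C : Set ((Fin n → ℝ) × ℝ))
    (hclosed : IsClosed C) (hconv : Convex ℝ C)
    (hcone : ∀ z ∈ C, ∀ t : ℝ, 0 ≤ t → t • z ∈ C)
    (v : Fin n → ℝ) (hv : ∀ z ∈ C, 0 ≤ pairWith z (v, 1))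
    (τ : Set ((Fin n → ℝ) × ℝ)) (hτ : τ = {z ∈ C | pairWith z (v, 1) = 0})
    (hdualface :
      {y | (∀ z ∈ C, 0 ≤ pairWith z y) ∧ ∀ t ∈ τ, pairWith t y = 0} =
        {y | ∃ l : ℝ, 0 ≤ l ∧ y = l • ((v, 1) : (Fin n → ℝ) × ℝ)}) :
    ∀ t ∈ intrinsicInterior ℝ τ, ∀ x : Fin n → ℝ,
      (∀ z ∈ C, 0 ≤ pairWith z (x, 1)) →
        0 ≤ pairWith t (x, 1) ∧ (pairWith t (x, 1) = 0 ↔ x = v) := by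
  subst hτ
  have dualFace_subset : dualFace (pairWithBilin n) C (annihilatedFace (pairWithBilin n) C (v, 1)) ⊆
      span ℝ {(v, (1 : ℝ))} := fun _ hy ↦
    have ⟨l, _, hl⟩ := hdualface.subset hy
    mem_span_singleton.2 ⟨l, hl.symm⟩
  exact fun t ht x hx ↦ statement15_general dualFace_subset ht hx
end
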